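/- Let Σ = (∅, ∅) be the hybrid signature with no propositional variables and no nominals, and let R = (ℝ, ≤) and Q = (ℚ, ≤) be the Kripke structures whose accessibility relations are the usual linear orders on the reals and the rationals. Then there exists an ω-bisimulation (B_k)_{k∈ω} between R and Q (satisfying all of the conditions (prop), (nom), (wvar), (forth), (back), (atv), (atn), (bind) and (ext), the conditions mentioning PROP or NOM holding vacuously) with B_0 non-empty. -/

import Mathlib

set_option autoImplicit false

/-! ## Hybrid logic: Kripke structures, hybrid formulas, satisfaction -/

/-- A Kripke structure over a hybrid signature `Σ = (P, Nom)`: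
`P` the propositional variables, `Nom` the nominals. -/
structure Kripke (P : Type) (Nom : Type) : Type 1 where
  W : Type
  R : W → W → Prop
  V : P → W → Prop
  nom : Nom → W

/-- Hybrid formulas over `Σ = (P, Nom)`; the world variables are the natural numbers.
`bind x φ` is `↓x φ`, `atv x φ` is `@_x φ`, `atn s φ` is `@_s φ`, `exq x φ` is `∃x φ`. -/
inductive HForm (P : Type) (Nom : Type) : Type
  | bot  : HForm P Nom
  | prop (p : P) : HForm P Nom
  | nom  (s : Nom) : HForm P Nom
  | wvar (x : ℕ) : HForm P Nom
  | neg  (φ : HForm P Nom) : HForm P Nom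
  | or   (φ ψ : HForm P Nom) : HForm P Nom
  | dia  (φ : HForm P Nom) : HForm P Nom
  | bind (x : ℕ) (φ : HForm P Nom) : HForm P Nom
  | atv  (x : ℕ) (φ : HForm P Nom) : HForm P Nom
  | atn  (s : Nom) (φ : HForm P Nom) : HForm P Nom
  | exq  (x : ℕ) (φ : HForm P Nom) : HForm P Nom

namespace HForm

/-- Conjunction, as an abbreviation `φ ∧ ψ := ¬(¬φ ∨ ¬ψ)`. -/
def and {P Nom : Type} (φ ψ : HForm P Nom) : HForm P Nom := .neg (.or (.neg φ) (.neg ψ))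

/-- Free world variables of a hybrid formula. -/
def free {P Nom : Type} : HForm P Nom → Set ℕ
  | .bot => ∅
  | .prop _ => ∅
  | .nom _ => ∅
  | .wvar x => {x}
  | .neg φ => φ.free
  | .or φ ψ => φ.free ∪ ψ.free
  | .dia φ => φ.free
  | .bind x φ => φ.free \ {x}
  | .atv x φ => insert x φ.free
  | .atn _ φ => φ.free
  | .exq x φ => φ.free \ {x}

/-- The degree of a hybrid formula. -/
def deg {P Nom : Type} : HForm P Nom → ℕ
  | .bot => 0
  | .prop _ => 0
  | .nom _ => 0
  | .wvar _ => 0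
  | .neg φ => φ.deg
  | .or φ ψ => max φ.deg ψ.deg
  | .dia φ => φ.deg + 1
  | .bind _ φ => φ.deg + 1
  | .atv _ φ => φ.deg
  | .atn _ φ => φ.deg
  | .exq _ φ => φ.deg + 1

end HForm

/-- The hybrid language features beyond basic modal logic: `@`, `↓`, `∃`, nominals. -/
inductive Feature : Type
  | at_ | bind | exq | nom
deriving DecidableEq

/-- Membership of a hybrid formula in the `F`-fragment: it uses only operators from `F`,
and nominals only if `Feature.nom ∈ F`. -/
def HForm.inFragment {P Nom : Type} (F : Set Feature) : HForm P Nom → Prop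
  | .bot => True
  | .prop _ => True
  | .nom _ => Feature.nom ∈ F
  | .wvar _ => True
  | .neg φ => φ.inFragment F
  | .or φ ψ => φ.inFragment F ∧ ψ.inFragment F
  | .dia φ => φ.inFragment F
  | .bind _ φ => Feature.bind ∈ F ∧ φ.inFragment F
  | .atv _ φ => Feature.at_ ∈ F ∧ φ.inFragment F
  | .atn _ φ => Feature.at_ ∈ F ∧ Feature.nom ∈ F ∧ φ.inFragment F
  | .exq _ φ => Feature.exq ∈ F ∧ φ.inFragment F

/-- Hybrid satisfaction `M, ν, m ⊩ φ`. -/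
def HSat {P Nom : Type} (M : Kripke P Nom) : (ℕ → M.W) → M.W → HForm P Nom → Prop
  | _, _, .bot => False
  | _, m, .prop p => M.V p m
  | _, m, .nom s => m = M.nom s
  | ν, m, .wvar x => m = ν x
  | ν, m, .neg φ => ¬ HSat M ν m φ
  | ν, m, .or φ ψ => HSat M ν m φ ∨ HSat M ν m ψ
  | ν, m, .dia φ => ∃ m', M.R m m' ∧ HSat M ν m' φ
  | ν, m, .bind x φ => HSat M (Function.update ν x m) m φ
  | ν, m, .atv x φ => HSat M ν (ν x) φ
  | ν, m, .atn s φ => HSat M ν (M.nom s) φ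
  | ν, m, .exq x φ => ∃ m' : M.W, HSat M (Function.update ν x m') m φ

/-- Satisfaction of a hybrid sentence: `M, m ⊩ φ` (the assignment is irrelevant). -/
def HSatS {P Nom : Type} (M : Kripke P Nom) (m : M.W) (φ : HForm P Nom) : Prop :=
  ∀ ν : ℕ → M.W, HSat M ν m φ

/-- `F`-elementary equivalence of pointed Kripke structures. -/
def FElemEquiv {P Nom : Type} (F : Set Feature) (M : Kripke P Nom) (m : M.W)
    (N : Kripke P Nom) (n : N.W) : Prop :=
  ∀ ψ : HForm P Nom, ψ.inFragment F → ψ.free = ∅ → (HSatS M m ψ ↔ HSatS N n ψ)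

/-! ## First-order logic over the corresponding signature `Σ°` -/

/-- First-order variables: the world variables `Sum.inl n` together with the two
designated variables `x = Sum.inr false` and `y = Sum.inr true`. -/
abbrev FVar : Type := ℕ ⊕ Bool

/-- First-order terms over `Σ°` with variables from `V`: variables and nominal constants. -/
inductive FOTerm (Nom V : Type) : Type
  | var (v : V)
  | nom (s : Nom)

/-- First-order formulas over `Σ°` (one binary relation `R`, a unary predicate for each
propositional variable, a constant for each nominal), with variables from `V`. -/
inductive FOForm (P Nom V : Type) : Type
  | bot
  | pred (p : P) (t : FOTerm Nom V)
  | rel (t u : FOTerm Nom V)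
  | eq (t u : FOTerm Nom V)
  | neg (φ : FOForm P Nom V)
  | or (φ ψ : FOForm P Nom V)
  | ex (v : V) (φ : FOForm P Nom V)

/-- First-order conjunction, `φ ∧ ψ := ¬(¬φ ∨ ¬ψ)`. -/
def FOForm.and {P Nom V : Type} (φ ψ : FOForm P Nom V) : FOForm P Nom V :=
  .neg (.or (.neg φ) (.neg ψ))

/-- Value of a term under an assignment, in a Kripke structure viewed as a `Σ°`-structure. -/
def FOTerm.val {P Nom V : Type} (M : Kripke P Nom) (g : V → M.W) : FOTerm Nom V → M.W
  | .var v => g v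
  | .nom s => M.nom s

/-- First-order satisfaction in a Kripke structure viewed as a `Σ°`-structure. -/
def FOSat {P Nom V : Type} [DecidableEq V] (M : Kripke P Nom) (g : V → M.W) :
    FOForm P Nom V → Prop
  | .bot => False
  | .pred p t => M.V p (t.val M g)
  | .rel t u => M.R (t.val M g) (u.val M g)
  | .eq t u => t.val M g = u.val M g
  | .neg φ => ¬ FOSat M g φ
  | .or φ ψ => FOSat M g φ ∨ FOSat M g ψ
  | .ex v φ => ∃ w : M.W, FOSat M (Function.update g v w) φ

/-- Variables of a first-order term. -/
def FOTerm.fvars {Nom V : Type} : FOTerm Nom V → Set V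
  | .var v => {v}
  | .nom _ => ∅

/-- Free variables of a first-order formula. -/
def FOForm.free {P Nom V : Type} : FOForm P Nom V → Set V
  | .bot => ∅
  | .pred _ t => t.fvars
  | .rel t u => t.fvars ∪ u.fvars
  | .eq t u => t.fvars ∪ u.fvars
  | .neg φ => φ.free
  | .or φ ψ => φ.free ∪ ψ.free
  | .ex v φ => φ.free \ {v}

/-- The standard translation `stdTr b φ`; `b : Bool` chooses the current designated
variable (`false` for `x`, `true` for `y`). -/
def stdTr {P Nom : Type} : Bool → HForm P Nom → FOForm P Nom FVar
  | b, .bot => .bot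
  | b, .prop p => .pred p (.var (Sum.inr b))
  | b, .nom s => .eq (.nom s) (.var (Sum.inr b))
  | b, .wvar z => .eq (.var (Sum.inl z)) (.var (Sum.inr b))
  | b, .neg φ => .neg (stdTr b φ)
  | b, .or φ ψ => .or (stdTr b φ) (stdTr b ψ)
  | b, .dia φ => .ex (Sum.inr (!b))
      (FOForm.and (.rel (.var (Sum.inr b)) (.var (Sum.inr (!b)))) (stdTr (!b) φ))
  | b, .bind z φ => .ex (Sum.inl z)
      (FOForm.and (.eq (.var (Sum.inl z)) (.var (Sum.inr b))) (stdTr b φ))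
  | b, .atv z φ => .ex (Sum.inr (!b))
      (FOForm.and (.eq (.var (Sum.inr (!b))) (.var (Sum.inl z))) (stdTr (!b) φ))
  | b, .atn s φ => .ex (Sum.inr (!b))
      (FOForm.and (.eq (.var (Sum.inr (!b))) (.nom s)) (stdTr (!b) φ))
  | b, .exq z φ => .ex (Sum.inl z) (stdTr b φ)

/-- `M ⊨ φ[m]`: satisfaction of a first-order formula whose free variable is the
designated variable `x = Sum.inr false`, under the assignment sending `x` to `m`. -/
def FOSatAt {P Nom : Type} (M : Kripke P Nom) (m : M.W) (φ : FOForm P Nom FVar) : Prop :=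
  ∀ g : FVar → M.W, g (Sum.inr false) = m → FOSat M g φ

/-! ## Bisimulations -/

/-- Ordinary bisimulations between Kripke structures. -/
def IsBisim {P Nom : Type} (M N : Kripke P Nom) (B : M.W → N.W → Prop) : Prop :=
  ∀ m n, B m n →
    (∀ p, M.V p m ↔ N.V p n) ∧
    (∀ m', M.R m m' → ∃ n', N.R n n' ∧ B m' n') ∧
    (∀ n', N.R n n' → ∃ m', M.R m m' ∧ B m' n')

/-- Quasi-injectivity of a bisimulation. -/
def QuasiInjective {P Nom : Type} (M N : Kripke P Nom) (B : M.W → N.W → Prop) : Prop :=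
  (∀ m n n', B m n → B m n' → n ≠ n' →
     ¬ Relation.ReflTransGen N.R n n' ∧ ¬ Relation.ReflTransGen N.R n' n) ∧
  (∀ m m' n, B m n → B m' n → m ≠ m' →
     ¬ Relation.ReflTransGen M.R m m' ∧ ¬ Relation.ReflTransGen M.R m' m)

/-- The type of relations `B_k ⊆ (M^k × M) × (N^k × N)`. -/
abbrev KRel {P Nom : Type} (M N : Kripke P Nom) (k : ℕ) : Type :=
  (Fin k → M.W) → M.W → (Fin k → N.W) → N.W → Prop

section BisimConds

variable {P Nom : Type} (M N : Kripke P Nom) {k : ℕ}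

/-- Condition (prop). -/
def PropCond (B : KRel M N k) : Prop :=
  ∀ mb m nb n, B mb m nb n → ∀ p, M.V p m ↔ N.V p n

/-- Condition (wvar). -/
def WvarCond (B : KRel M N k) : Prop :=
  ∀ mb m nb n, B mb m nb n → ∀ j : Fin k, mb j = m ↔ nb j = n

/-- Condition (forth). -/
def ForthCond (B : KRel M N k) : Prop :=
  ∀ mb m nb n, B mb m nb n → ∀ m', M.R m m' → ∃ n', N.R n n' ∧ B mb m' nb n'

/-- Condition (back). -/
def BackCond (B : KRel M N k) : Prop :=
  ∀ mb m nb n, B mb m nb n → ∀ n', N.R n n' → ∃ m', M.R m m' ∧ B mb m' nb n'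

/-- Condition (nom). -/
def NomCond (B : KRel M N k) : Prop :=
  ∀ mb m nb n, B mb m nb n → ∀ s : Nom, m = M.nom s ↔ n = N.nom s

/-- Condition (atv). -/
def AtvCond (B : KRel M N k) : Prop :=
  ∀ mb m nb n, B mb m nb n → ∀ j : Fin k, B mb (mb j) nb (nb j)

/-- Condition (atn). -/
def AtnCond (B : KRel M N k) : Prop :=
  ∀ mb m nb n, B mb m nb n → ∀ s : Nom, B mb (M.nom s) nb (N.nom s)

/-- Condition (bind). -/
def BindCond (B : KRel M N k) : Prop :=
  ∀ mb m nb n, B mb m nb n → ∀ j : Fin k,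
    B (Function.update mb j m) m (Function.update nb j n) n

/-- Condition (ex). -/
def ExCond (B : KRel M N k) : Prop :=
  ∀ mb m nb n, B mb m nb n → ∀ j : Fin k,
    (∀ u : M.W, ∃ u' : N.W, B (Function.update mb j u) m (Function.update nb j u') n) ∧
    (∀ u' : N.W, ∃ u : M.W, B (Function.update mb j u) m (Function.update nb j u') n)

/-- A `k`-bisimulation: conditions (prop), (wvar), (forth), (back). -/
def IsKBisim (B : KRel M N k) : Prop :=
  PropCond M N B ∧ WvarCond M N B ∧ ForthCond M N B ∧ BackCond M N B

/-- The conditions `cond(F)` for a feature set `F`, for a single relation `B_k`. -/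
def SatisfiesConds (F : Set Feature) (B : KRel M N k) : Prop :=
  (Feature.nom ∈ F → NomCond M N B) ∧
  (Feature.bind ∈ F → BindCond M N B) ∧
  (Feature.at_ ∈ F → AtvCond M N B) ∧
  (Feature.exq ∈ F → ExCond M N B) ∧
  (Feature.at_ ∈ F → Feature.nom ∈ F → AtnCond M N B)

end BisimConds

/-- An `F`-ω-bisimulation: a non-empty family `(B_k)` of `k`-bisimulations satisfying
(ext) and all the conditions in `cond(F)`. -/
def IsFOmegaBisim {P Nom : Type} (F : Set Feature) (M N : Kripke P Nom)
    (B : (k : ℕ) → KRel M N k) : Prop :=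
  (∀ k, IsKBisim M N (B k)) ∧
  (∃ k mb m nb n, B k mb m nb n) ∧
  (∀ k (mb : Fin k → M.W) m nb n, B k mb m nb n →
     B (k+1) (Fin.snoc mb m) m (Fin.snoc nb n) n) ∧
  (∀ k, SatisfiesConds M N F (B (k : ℕ)))

/-! ## `(k,ℓ)`- and `(ω,ℓ)`-bisimulations -/

section KL

variable {P Nom : Type} (M N : Kripke P Nom)

/-- A basic `(k,ℓ)`-bisimulation from `M` to `N` (the relations `Z i` for `i ≤ ℓ`). -/
def IsBasicKLBisim (k ℓ : ℕ) (Z : ℕ → KRel M N k) : Prop :=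
  (∀ i ≤ ℓ, PropCond M N (Z i) ∧ WvarCond M N (Z i)) ∧
  (∀ i, 0 < i → i ≤ ℓ → ∀ mb m nb n, Z (i-1) mb m nb n →
    (∀ u, M.R m u → ∃ u', N.R n u' ∧ Z i mb u nb u') ∧
    (∀ u', N.R n u' → ∃ u, M.R m u ∧ Z i mb u nb u'))

/-- The conditions `cond(F)` for a `(k,ℓ)`-bisimulation: (nom), (atv), (atn) are
required within each `Z i` (`i ≤ ℓ`), whereas (bind) and (ex) pass from `Z (i-1)`
to `Z i` for `0 < i ≤ ℓ`. -/
def KLSatisfiesConds (F : Set Feature) (k ℓ : ℕ) (Z : ℕ → KRel M N k) : Prop :=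
  (Feature.nom ∈ F → ∀ i ≤ ℓ, NomCond M N (Z i)) ∧
  (Feature.at_ ∈ F → ∀ i ≤ ℓ, AtvCond M N (Z i)) ∧
  (Feature.at_ ∈ F → Feature.nom ∈ F → ∀ i ≤ ℓ, AtnCond M N (Z i)) ∧
  (Feature.bind ∈ F → ∀ i, 0 < i → i ≤ ℓ → ∀ mb m nb n, Z (i-1) mb m nb n →
     ∀ j : Fin k, Z i (Function.update mb j m) m (Function.update nb j n) n) ∧
  (Feature.exq ∈ F → ∀ i, 0 < i → i ≤ ℓ → ∀ mb m nb n, Z (i-1) mb m nb n →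
     ∀ j : Fin k,
       (∀ u : M.W, ∃ u' : N.W, Z i (Function.update mb j u) m (Function.update nb j u') n) ∧
       (∀ u' : N.W, ∃ u : M.W, Z i (Function.update mb j u) m (Function.update nb j u') n))

/-- An `F`-`(k,ℓ)`-bisimulation. -/
def IsFKLBisim (F : Set Feature) (k ℓ : ℕ) (Z : ℕ → KRel M N k) : Prop :=
  IsBasicKLBisim M N k ℓ Z ∧ KLSatisfiesConds M N F k ℓ Z

/-- An `F`-`(ω,ℓ)`-bisimulation: a system `(Z^k_i)_{i ≤ ℓ, k ∈ ω}` of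
`F`-`(k,ℓ)`-bisimulations satisfying the extensibility condition (ext). -/
def IsFOmegaLBisim (F : Set Feature) (ℓ : ℕ)
    (Z : (k : ℕ) → ℕ → KRel M N k) : Prop :=
  (∀ k, IsFKLBisim M N F k ℓ (Z k)) ∧
  (∀ k i, 0 < i → i ≤ ℓ → ∀ (mb : Fin k → M.W) m nb n, Z k (i-1) mb m nb n →
     Z (k+1) i (Fin.snoc mb m) m (Fin.snoc nb n) n)

end KL
/-- The reals with their usual order, as a Kripke structure over the empty signature. -/
def realK : Kripke Empty Empty where
  W := ℝ
  R := fun a b => a ≤ b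
  V := fun p _ => p.elim
  nom := fun s => s.elim

/-- The rationals with their usual order, as a Kripke structure over the empty signature. -/
def ratK : Kripke Empty Empty where
  W := ℚ
  R := fun a b => a ≤ b
  V := fun p _ => p.elim
  nom := fun s => s.elim
theorem key_ext {ι α β : Type} [Fintype ι] [LinearOrder α] [LinearOrder β]
    [DenselyOrdered β] [NoMinOrder β] [NoMaxOrder β] [Nonempty β]
    (f : ι → α) (g : ι → β) (h : ∀ i j, f i ≤ f j ↔ g i ≤ g j) (x : α) :
    ∃ y : β, (∀ i, f i ≤ x ↔ g i ≤ y) ∧ (∀ i, x ≤ f i ↔ y ≤ g i) := by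
  classical
  by_cases hx : ∃ i, f i = x
  · obtain ⟨i, rfl⟩ := hx
    exact ⟨g i, fun j => h j i, fun j => h i j⟩
  · push Not at hx
    obtain ⟨y, h1, h2⟩ := Order.exists_between_finsets
      ((Finset.univ.filter (fun i => f i < x)).image g)
      ((Finset.univ.filter (fun i => x < f i)).image g) (by
        intro a ha b hb
        simp only [Finset.mem_image, Finset.mem_filter, Finset.mem_univ, true_and] at ha hb
        obtain ⟨i, hi, rfl⟩ := ha
        obtain ⟨j, hj, rfl⟩ := hb
        exact lt_of_not_ge fun hc => absurd ((h j i).2 hc) (not_le.2 (hi.trans hj)))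
    have k1 : ∀ i, f i < x → g i < y := fun i hi => h1 _ (Finset.mem_image_of_mem g (by simpa using hi))
    have k2 : ∀ i, x < f i → y < g i := fun i hi => h2 _ (Finset.mem_image_of_mem g (by simpa using hi))
    refine ⟨y, fun i => ?_, fun i => ?_⟩
    · rcases lt_or_gt_of_ne (hx i) with hi | hi
      · exact ⟨fun _ => (k1 i hi).le, fun _ => hi.le⟩
      · exact ⟨fun hc => absurd hc (not_le.2 hi), fun hc => absurd hc (not_le.2 (k2 i hi))⟩
    · rcases lt_or_gt_of_ne (hx i) with hi | hi
      · exact ⟨fun hc => absurd hc (not_le.2 hi), fun hc => absurd hc (not_le.2 (k1 i hi))⟩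
      · exact ⟨fun _ => (k2 i hi).le, fun _ => hi.le⟩

def Compat {α β : Type} [LE α] [LE β] {k : ℕ} (a : Fin k → α) (m : α) (b : Fin k → β) (n : β) :
    Prop :=
  (∀ i j, a i ≤ a j ↔ b i ≤ b j) ∧ (∀ i, a i ≤ m ↔ b i ≤ n) ∧ (∀ i, m ≤ a i ↔ n ≤ b i)

theorem Compat.symm' {α β : Type} [LE α] [LE β] {k : ℕ} {a : Fin k → α} {m : α} {b : Fin k → β}
    {n : β} (h : Compat a m b n) : Compat b n a m :=
  ⟨fun i j => (h.1 i j).symm, fun i => (h.2.1 i).symm, fun i => (h.2.2 i).symm⟩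

theorem Compat.forth {α β : Type} [LinearOrder α] [LinearOrder β]
    [DenselyOrdered β] [NoMinOrder β] [NoMaxOrder β] {k : ℕ} {a : Fin k → α} {m : α}
    {b : Fin k → β} {n : β} (h : Compat a m b n) (m' : α) (hm : m ≤ m') :
    ∃ n', n ≤ n' ∧ Compat a m' b n' := by
  haveI : Nonempty β := ⟨n⟩
  obtain ⟨y, h1, h2⟩ := key_ext (ι := Option (Fin k)) (fun o => o.elim m a) (fun o => o.elim n b)
    (by
      rintro (_ | i) (_ | j)
      · simp
      · exact h.2.2 j
      · exact h.2.1 i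
      · exact h.1 i j) m'
  exact ⟨y, (h1 none).1 hm, h.1, fun i => h1 (some i), fun i => h2 (some i)⟩

theorem Compat.bind' {α β : Type} [LinearOrder α] [LinearOrder β] {k : ℕ} {a : Fin k → α} {m : α}
    {b : Fin k → β} {n : β} (h : Compat a m b n) (j : Fin k) :
    Compat (Function.update a j m) m (Function.update b j n) n := by
  obtain ⟨h1, h2, h3⟩ := h
  refine ⟨fun i i' => ?_, fun i => ?_, fun i => ?_⟩
  · by_cases hi : i = j <;> by_cases hi' : i' = j <;> simp [Function.update_apply, hi, hi', h1, h2, h3]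
  · by_cases hi : i = j <;> simp [Function.update_apply, hi, h2]
  · by_cases hi : i = j <;> simp [Function.update_apply, hi, h3]

theorem Compat.ext' {α β : Type} [LinearOrder α] [LinearOrder β] {k : ℕ} {a : Fin k → α} {m : α}
    {b : Fin k → β} {n : β} (h : Compat a m b n) :
    Compat (Fin.snoc a m : Fin (k+1) → α) m (Fin.snoc b n : Fin (k+1) → β) n := by
  obtain ⟨h1, h2, h3⟩ := h
  refine ⟨fun i i' => ?_, fun i => ?_, fun i => ?_⟩
  · induction i using Fin.lastCases <;> induction i' using Fin.lastCases <;> simp [h1, h2, h3]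
  · induction i using Fin.lastCases <;> simp [h2]
  · induction i using Fin.lastCases <;> simp [h3]

/-- Example 5 of the paper. There is an ω-bisimulation between
`(ℝ, ≤)` and `(ℚ, ≤)` satisfying (prop), (nom), (wvar), (forth), (back), (atv), (atn),
(bind) and (ext), with `B₀` non-empty. -/
theorem omega_bisim_real_rat :
    ∃ B : (k : ℕ) → KRel realK ratK k,
      (∀ k, IsKBisim realK ratK (B k)) ∧
      (∀ k, NomCond realK ratK (B k)) ∧
      (∀ k, AtvCond realK ratK (B k)) ∧
      (∀ k, AtnCond realK ratK (B k)) ∧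
      (∀ k, BindCond realK ratK (B k)) ∧
      (∀ k (mb : Fin k → realK.W) m nb n, B k mb m nb n →
         B (k+1) (Fin.snoc mb m) m (Fin.snoc nb n) n) ∧
      (∃ m n, B 0 Fin.elim0 m Fin.elim0 n) := by
  refine ⟨fun k a m b n => Compat (α := ℝ) (β := ℚ) a m b n, fun k => ⟨?_, ?_, ?_, ?_⟩,
    fun k => ?_, fun k => ?_, fun k => ?_, fun k => ?_, ?_, ?_⟩
  · intro _ _ _ _ _ p
    exact p.elim
  · intro a m b n h j
    constructor
    · intro e
      exact le_antisymm (α := ℚ) ((h.2.1 j).1 (le_of_eq (α := ℝ) e))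
        ((h.2.2 j).1 (le_of_eq (α := ℝ) e.symm))
    · intro e
      exact le_antisymm (α := ℝ) ((h.2.1 j).2 (le_of_eq (α := ℚ) e))
        ((h.2.2 j).2 (le_of_eq (α := ℚ) e.symm))
  · intro a m b n h m' hm
    exact Compat.forth h m' hm
  · intro a m b n h n' hn
    obtain ⟨m', h1, h2⟩ := Compat.forth (Compat.symm' h) n' hn
    exact ⟨m', h1, Compat.symm' h2⟩
  · intro _ _ _ _ _ s
    exact s.elim
  · intro a m b n h j
    exact ⟨h.1, fun i => h.1 i j, fun i => h.1 j i⟩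
  · intro _ _ _ _ _ s
    exact s.elim
  · intro a m b n h j
    exact Compat.bind' h j
  · intro k a m b n h
    exact Compat.ext' h
  · exact ⟨(0 : ℝ), (0 : ℚ), fun i => i.elim0, fun i => i.elim0, fun i => i.elim0⟩
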